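/- Let K = ⌈n^{1−ε}⌉ for a constant 0 < ε < 1, let M = 1, and impose no proximity constraint (r = √n, so the two candidates of Strategy II are chosen uniformly among all nodes caching the requested file). Suppose the popularity distribution P satisfies ∑_{j=1}^K (p_j·n)^{−c} = o(1) for some constant c > 0. Then Strategy II achieves maximum load L = O(log log n) with probability 1 − o(1). In particular, the Uniform distribution over K = ⌈n^{1−ε}⌉ files satisfies this hypothesis, and the Zipf distribution with parameter γ ≥ 1 satisfies it whenever ε ∈ ((γ−1)/γ, 1). -/

import Mathlib

open scoped Classical BigOperators
open Filter

/-- Nodes of the `m × m` torus grid (a `√n × √n` grid with wrap-around, `n = m²`). -/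
abbrev Node (m : ℕ) := Fin m × Fin m

/-- Wrap-around distance between two coordinates in `Fin m`. -/
def cdist {m : ℕ} (a b : Fin m) : ℕ :=
  min ((a.val + m - b.val) % m) ((b.val + m - a.val) % m)

/-- Graph (shortest-path) distance on the torus grid. -/
def torusDist {m : ℕ} (u v : Node m) : ℕ := cdist u.1 v.1 + cdist u.2 v.2

/-- A cache placement: each of the `m²` nodes fills `M` cache slots with files from a
library of `K` files.  Under the Uniform popularity distribution the random placement
is uniform over all such functions (each slot i.i.d. uniform on the `K` files). -/
abbrev Placement (m M K : ℕ) := Node m → Fin M → Fin K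

/-- Node `u` has cached file `j`. -/
def cached {m M K : ℕ} (ω : Placement m M K) (u : Node m) (j : Fin K) : Prop :=
  ∃ i, ω u i = j

/-- Probability of an event under the uniform measure on a finite type. -/
noncomputable def unifProb {Ω : Type*} [Fintype Ω] (E : Set Ω) : ℝ :=
  ((Finset.univ.filter (fun ω => ω ∈ E)).card : ℝ) / (Fintype.card Ω : ℝ)

/-- The set of candidate servers for a request at `u` for file `j` with proximity
radius `r`. -/
noncomputable def candSet {m M K : ℕ} (ω : Placement m M K) (u : Node m) (j : Fin K)
    (r : ℕ) : Finset (Node m) :=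
  Finset.univ.filter fun v => cached ω v j ∧ torusDist u v ≤ r

/-- The load vector after the first `t` balls (requests) have been processed. -/
def loadsUpTo {V : Type*} [DecidableEq V] {n' : ℕ} (cand : Fin n' → V × V)
    (tb : Fin n' → Bool) : ℕ → V → ℕ
  | 0 => fun _ => 0
  | t + 1 => fun v =>
      if h : t < n' then
        let L := loadsUpTo cand tb t
        let c := cand ⟨t, h⟩
        let w := if L c.1 < L c.2 then c.1
          else if L c.2 < L c.1 then c.2
          else if tb ⟨t, h⟩ then c.1 else c.2
        if v = w then L v + 1 else L v
      else loadsUpTo cand tb t v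

/-- The maximum load after all `n'` requests. -/
noncomputable def maxLoadII {V : Type*} [DecidableEq V] [Fintype V] {n' : ℕ}
    (cand : Fin n' → V × V) (tb : Fin n' → Bool) : ℕ :=
  Finset.univ.sup (loadsUpTo cand tb n')

/-- Sample space of Strategy II. -/
abbrev SampleII (m M K n' : ℕ) :=
  Placement m M K × (Fin n' → Node m × Fin K) × (Fin n' → Node m × Node m) ×
    (Fin n' → Bool)

/-- Probability weight of a sample point of Strategy II under the popularity
distribution `p`: each cache slot is drawn i.i.d. from `p`, each request has a uniform
origin and a `p`-distributed file, the two candidates of request `t` are drawn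
uniformly from the caches of the requested file within distance `r` of the origin, and
the tie-breaking bits are uniform. -/
noncomputable def weightIIP (m M K r n' : ℕ) (p : Fin K → ℝ)
    (x : SampleII m M K n') : ℝ :=
  (∏ u : Node m, ∏ i : Fin M, p (x.1 u i)) *
    (1 / ((m ^ 2 : ℕ) : ℝ)) ^ n' * (∏ t : Fin n', p (x.2.1 t).2) * (1 / 2 ^ n') *
    ∏ t : Fin n',
      if (x.2.2.1 t).1 ∈ candSet x.1 (x.2.1 t).1 (x.2.1 t).2 r ∧
          (x.2.2.1 t).2 ∈ candSet x.1 (x.2.1 t).1 (x.2.1 t).2 r then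
        1 / ((candSet x.1 (x.2.1 t).1 (x.2.1 t).2 r).card : ℝ) ^ 2
      else 0

/-- Probability of an event for Strategy II under popularity distribution `p`. -/
noncomputable def probIIP (m M K r n' : ℕ) (p : Fin K → ℝ)
    (E : Set (SampleII m M K n')) : ℝ :=
  ∑ x ∈ Finset.univ.filter (fun x => x ∈ E), weightIIP m M K r n' p x

/-- Library size `K = ⌈n^(1-ε)⌉`. -/
noncomputable def Kf (ε : ℝ) (n : ℕ) : ℕ := ⌈(n : ℝ) ^ (1 - ε)⌉₊

/-- The Zipf popularity distribution with parameter `γ` on `K` files. -/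
noncomputable def zipfP (K : ℕ) (γ : ℝ) (j : Fin K) : ℝ :=
  (((j.val + 1 : ℕ) : ℝ) ^ γ)⁻¹ / ∑ i : Fin K, (((i.val + 1 : ℕ) : ℝ) ^ γ)⁻¹

/-!
Write `μ_j = p_j n` for the expected number of requests for file `j`, which is also the expected
number of its servers. By Chernoff's bound there are at least `μ_j / 4` servers and at most `4 μ_j`
requests, outside an event of probability `2 exp (-μ_j / 4)`. Since `M = 1`, every node serves a
single file, so the files do not interact and the requests for file `j` are about `μ_j` balls thrown
with two choices into about `μ_j` bins.

In one such process at most `μ / 512` servers reach load `2048`, by Markov's inequality, and a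
request can raise a server above load `i` only if both of its candidates have load at least `i`. The
fraction of servers with load at least `i` is therefore roughly squared from one `i` to the next,
and after `log log μ` levels at most `μ ^ (2 / 5)` servers are left. From then on a single request
hits two of them with probability of order `μ ^ (-6 / 5)`, so that `k` such hits among the `O(μ)`
requests have probability of order `μ ^ (-k / 5)`. Taking `k ≥ 5 c`, the union over all files costs
a multiple of `∑ μ_j ^ (-c)`.
-/

open Finset Asymptotics
open scoped Topology

section Mass

variable {Ω : Type*} [Fintype Ω] {w : Ω → ℝ} {E F : Set Ω}

/-- The mass that a weight function on a finite type gives to an event. The weights need not add up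
to `1`: Strategy II only has a subprobability when some requested file is cached nowhere. -/
noncomputable def mass (w : Ω → ℝ) (E : Set Ω) : ℝ :=
  ∑ x ∈ univ.filter (fun x => x ∈ E), w x

lemma mass_nonneg (hw : ∀ x, 0 ≤ w x) : 0 ≤ mass w E :=
  sum_nonneg fun x _ => hw x

lemma mass_le_sum (hw : ∀ x, 0 ≤ w x) : mass w E ≤ ∑ x, w x :=
  sum_le_sum_of_subset_of_nonneg (filter_subset _ _) fun x _ _ => hw x

lemma mass_mono_of_support (hw : ∀ x, 0 ≤ w x) (h : ∀ x ∈ E, w x ≠ 0 → x ∈ F) :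
    mass w E ≤ mass w F := by
  rw [mass, mass, ← sum_filter_ne_zero, filter_filter]
  refine sum_le_sum_of_subset_of_nonneg (fun x hx => ?_) fun x _ _ => hw x
  obtain ⟨hxE, hx0⟩ := (mem_filter.1 hx).2
  exact mem_filter.2 ⟨mem_univ x, h x hxE hx0⟩

lemma mass_add_mass_compl (w : Ω → ℝ) (E : Set Ω) : mass w E + mass w Eᶜ = ∑ x, w x := by
  simpa only [mass, Set.mem_compl_iff] using sum_filter_add_sum_filter_not univ (· ∈ E) w

lemma mass_iUnion_mem_le {ι : Type*} (hw : ∀ x, 0 ≤ w x) (s : Finset ι) (E : ι → Set Ω) :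
    mass w {x | ∃ i ∈ s, x ∈ E i} ≤ ∑ i ∈ s, mass w (E i) := by
  simp only [mass, sum_filter]
  rw [sum_comm]
  refine sum_le_sum fun x _ => ?_
  have hterm (i : ι) : 0 ≤ if x ∈ E i then w x else 0 := ite_nonneg (hw x) le_rfl
  split_ifs with hx
  · obtain ⟨i, hi, hxi⟩ := hx
    calc w x = if x ∈ E i then w x else 0 := (if_pos hxi).symm
      _ ≤ _ := single_le_sum (fun i _ => hterm i) hi
  · exact sum_nonneg fun i _ => hterm i

lemma mass_compl_forall_le {ι : Type*} [Fintype ι] (hw : ∀ x, 0 ≤ w x) (q : ι → Prop)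
    (R : ι → Ω → Prop) : mass w {x | ∀ i, q i → R i x}ᶜ ≤ ∑ i with q i, mass w {x | ¬R i x} := by
  refine (mass_mono_of_support hw fun x hx _ => ?_).trans (mass_iUnion_mem_le hw _ _)
  simpa using hx

lemma mass_union_le (hw : ∀ x, 0 ≤ w x) : mass w (E ∪ F) ≤ mass w E + mass w F := by
  simp only [mass, Set.mem_union, filter_or]
  linarith [sum_union_inter (s₁ := univ.filter (· ∈ E)) (s₂ := univ.filter (· ∈ F)) (f := w),
    sum_nonneg fun x (_ : x ∈ univ.filter (· ∈ E) ∩ univ.filter (· ∈ F)) => hw x]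

lemma mass_le_exp_neg_mul_sum (hw : ∀ x, 0 ≤ w x) (X : Ω → ℝ) {a : ℝ} (h : ∀ x ∈ E, a ≤ X x) :
    mass w E ≤ Real.exp (-a) * ∑ x, w x * Real.exp (X x) := by
  rw [mul_sum]
  calc mass w E ≤ ∑ x ∈ univ.filter (· ∈ E), Real.exp (-a) * (w x * Real.exp (X x)) := by
        refine sum_le_sum fun x hx => ?_
        have hone : 1 ≤ Real.exp (-a) * Real.exp (X x) := by
          rw [← Real.exp_add]
          exact Real.one_le_exp (by linarith [h x (mem_filter.1 hx).2])
        calc w x ≤ w x * (Real.exp (-a) * Real.exp (X x)) := le_mul_of_one_le_right (hw x) hone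
          _ = _ := by ring
    _ ≤ _ := sum_le_sum_of_subset_of_nonneg (filter_subset _ _) fun x _ _ =>
        mul_nonneg (Real.exp_pos _).le (mul_nonneg (hw x) (Real.exp_pos _).le)

end Mass

section CompWeight

variable {A B : Type*} {w : A → ℝ} {κ : A → B → ℝ}

/-- The joint weight of a point drawn from `w` and a second point drawn from `κ` given the first. -/
def compWeight (w : A → ℝ) (κ : A → B → ℝ) (x : A × B) : ℝ := w x.1 * κ x.1 x.2

lemma compWeight_nonneg (hw : ∀ a, 0 ≤ w a) (hκ : ∀ a b, 0 ≤ κ a b) (x : A × B) :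
    0 ≤ compWeight w κ x :=
  mul_nonneg (hw _) (hκ _ _)

variable [Fintype A] [Fintype B]

lemma sum_compWeight_le_one (hw : ∀ a, 0 ≤ w a) (hw1 : ∑ a, w a ≤ 1) (hκ1 : ∀ a, ∑ b, κ a b ≤ 1) :
    ∑ x, compWeight w κ x ≤ 1 := by
  simp only [compWeight, Fintype.sum_prod_type, ← mul_sum]
  exact (sum_le_sum fun a _ => mul_le_of_le_one_right (hw a) (hκ1 a)).trans hw1

lemma mass_compWeight (E : Set (A × B)) :
    mass (compWeight w κ) E = ∑ a, w a * mass (κ a) {b | (a, b) ∈ E} := by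
  simp only [mass, sum_filter, Fintype.sum_prod_type, compWeight, mul_sum, Set.mem_ofPred_eq,
    mul_ite, mul_zero]

lemma le_mass_compWeight_const {u : B → ℝ} (hu : ∀ b, 0 ≤ u b) (hu1 : ∑ b, u b = 1)
    {E : Set (A × B)} {r : ℝ} (h : ∀ b, r ≤ mass w {a | (a, b) ∈ E}) :
    r ≤ mass (compWeight w fun _ => u) E := by
  have hswap : mass (compWeight w fun _ => u) E = ∑ b, u b * mass w {a | (a, b) ∈ E} := by
    simp only [mass, sum_filter, Fintype.sum_prod_type_right, compWeight, mul_sum,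
      Set.mem_ofPred_eq, mul_ite, mul_zero, mul_comm]
  calc r = ∑ b, u b * r := by rw [← sum_mul, hu1, one_mul]
    _ ≤ ∑ b, u b * mass w {a | (a, b) ∈ E} :=
        sum_le_sum fun b _ => mul_le_mul_of_nonneg_left (h b) (hu b)
    _ = _ := hswap.symm

lemma one_sub_le_mass_compWeight (hw : ∀ a, 0 ≤ w a) (hw1 : ∑ a, w a = 1)
    (hκ : ∀ a b, 0 ≤ κ a b) {G : Set A} {E : Set (A × B)} {δ : ℝ} (hδ : 0 ≤ δ)
    (h : ∀ a ∈ G, w a ≠ 0 → 1 - δ ≤ mass (κ a) {b | (a, b) ∈ E}) :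
    1 - (δ + mass w Gᶜ) ≤ mass (compWeight w κ) E := by
  have hG : 1 - mass w Gᶜ = mass w G := by linarith [mass_add_mass_compl w G]
  have hle : mass w Gᶜ ≤ 1 := hw1 ▸ mass_le_sum hw
  rw [mass_compWeight]
  calc 1 - (δ + mass w Gᶜ) ≤ (1 - mass w Gᶜ) * (1 - δ) := by
        nlinarith [mass_nonneg hw (E := Gᶜ), hle]
    _ = ∑ a ∈ univ.filter (· ∈ G), w a * (1 - δ) := by rw [hG, mass, sum_mul]
    _ ≤ ∑ a ∈ univ.filter (· ∈ G), w a * mass (κ a) {b | (a, b) ∈ E} := by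
        refine sum_le_sum fun a ha => ?_
        by_cases ha0 : w a = 0
        · simp only [ha0, zero_mul, le_refl]
        · exact mul_le_mul_of_nonneg_left (h a (mem_filter.1 ha).2 ha0) (hw a)
    _ ≤ _ := sum_le_sum_of_subset_of_nonneg (filter_subset _ _) fun a _ _ =>
        mul_nonneg (hw a) (mass_nonneg (hκ a))

end CompWeight

section ProdWeight

variable {ι X : Type*} [Fintype ι]

/-- The weight of a family of independent points, the `i`-th one drawn from `w i`. -/
def prodWeight (w : ι → X → ℝ) (f : ι → X) : ℝ := ∏ i, w i (f i)

lemma prodWeight_nonneg {w : ι → X → ℝ} (hw : ∀ i x, 0 ≤ w i x) (f : ι → X) :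
    0 ≤ prodWeight w f :=
  prod_nonneg fun i _ => hw i (f i)

lemma apply_ne_zero_of_prodWeight_ne_zero {w : ι → X → ℝ} {f : ι → X} (hf : prodWeight w f ≠ 0)
    (i : ι) : w i (f i) ≠ 0 :=
  prod_ne_zero_iff.1 hf i (mem_univ i)

lemma sum_prodWeight [DecidableEq ι] [Fintype X] (w : ι → X → ℝ) :
    ∑ f, prodWeight w f = ∏ i, ∑ x, w i x :=
  (Fintype.prod_sum w).symm

lemma sum_prodWeight_const [DecidableEq ι] [Fintype X] {w : X → ℝ} (hw1 : ∑ x, w x = 1) :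
    ∑ f : ι → X, prodWeight (fun _ => w) f = 1 := by
  simp only [sum_prodWeight, hw1, prod_const_one]

lemma sum_prodWeight_le_one [DecidableEq ι] [Fintype X] {w : ι → X → ℝ} (hw : ∀ i x, 0 ≤ w i x)
    (hw1 : ∀ i, ∑ x, w i x ≤ 1) : ∑ f, prodWeight w f ≤ 1 := by
  rw [sum_prodWeight]
  exact prod_le_one (fun i _ => sum_nonneg fun x _ => hw i x) fun i _ => hw1 i

lemma prodWeight_update_mul [DecidableEq ι] (w : ι → X → ℝ) (f : ι → X) (t : ι) (x : X) :
    prodWeight w (Function.update f t x) * w t (f t) = prodWeight w f * w t x := by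
  have herase : ∏ s ∈ univ.erase t, w s (Function.update f t x s) =
      ∏ s ∈ univ.erase t, w s (f s) :=
    prod_congr rfl fun s hs => by rw [Function.update_of_ne (ne_of_mem_erase hs)]
  rw [prodWeight, prodWeight, ← mul_prod_erase univ _ (mem_univ t),
    ← mul_prod_erase univ (fun s => w s (f s)) (mem_univ t), herase, Function.update_self]
  ring

lemma sum_prodWeight_mul_eq_resample [DecidableEq ι] [Fintype X] (w : ι → X → ℝ) {t : ι}
    (ht : ∑ x, w t x = 1) (Φ : (ι → X) → ℝ) :
    ∑ f, prodWeight w f * Φ f =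
      ∑ f, prodWeight w f * ∑ x, w t x * Φ (Function.update f t x) := by
  let swap : (ι → X) × X → (ι → X) × X := fun y => (Function.update y.1 t y.2, y.1 t)
  have hswap : Function.Involutive swap := fun y => by simp [swap]
  calc ∑ f, prodWeight w f * Φ f
      = ∑ y : (ι → X) × X, prodWeight w y.1 * w t y.2 * Φ y.1 := by
        simp only [Fintype.sum_prod_type, ← sum_mul, ← mul_sum, ht, mul_one]
    _ = ∑ y : (ι → X) × X, prodWeight w (Function.update y.1 t y.2) * w t (y.1 t) *
          Φ (Function.update y.1 t y.2) :=
        (Fintype.sum_equiv hswap.toPerm _ _ fun y => rfl).symm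
    _ = _ := by
        simp only [prodWeight_update_mul, Fintype.sum_prod_type, mul_sum, mul_assoc]

variable [LinearOrder ι] [Fintype X] {w : ι → X → ℝ}

lemma sum_prodWeight_mul_exp_sum_le (hw : ∀ t x, 0 ≤ w t x) (hw1 : ∀ t, ∑ x, w t x = 1)
    {Y : ι → (ι → X) → ℝ} (hY : ∀ s t, s < t → ∀ f x, Y s (Function.update f t x) = Y s f)
    {β : ι → ℝ} (hβ : ∀ t f, ∑ x, w t x * Real.exp (Y t (Function.update f t x)) ≤ Real.exp (β t))
    (S : Finset ι) :
    ∑ f, prodWeight w f * Real.exp (∑ t ∈ S, Y t f) ≤ Real.exp (∑ t ∈ S, β t) := by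
  induction S using induction_on_max with
  | empty => simp [sum_prodWeight, hw1]
  | insert t S ht ih =>
    have htS : t ∉ S := fun h => lt_irrefl t (ht t h)
    have hpast (f : ι → X) (x : X) :
        ∑ s ∈ S, Y s (Function.update f t x) = ∑ s ∈ S, Y s f :=
      sum_congr rfl fun s hs => hY s t (ht s hs) f x
    simp only [sum_insert htS]
    rw [sum_prodWeight_mul_eq_resample w (hw1 t), add_comm, Real.exp_add]
    calc _ = ∑ f, prodWeight w f * (Real.exp (∑ s ∈ S, Y s f) *
            ∑ x, w t x * Real.exp (Y t (Function.update f t x))) := by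
          refine sum_congr rfl fun f _ => ?_
          simp only [hpast, Real.exp_add, mul_sum]
          exact sum_congr rfl fun x _ => by ring
      _ ≤ ∑ f, prodWeight w f * (Real.exp (∑ s ∈ S, Y s f) * Real.exp (β t)) := by
          gcongr with f
          · exact prodWeight_nonneg hw f
          · exact hβ t f
      _ = (∑ f, prodWeight w f * Real.exp (∑ s ∈ S, Y s f)) * Real.exp (β t) := by
          simp only [sum_mul, mul_assoc]
      _ ≤ _ := by gcongr

/-- The number of the events `A t` that occur at a given sample point. -/
noncomputable def eventCount {Ω : Type*} (A : ι → Set Ω) (ω : Ω) : ℕ :=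
  (univ.filter fun t => ω ∈ A t).card

lemma sum_mul_exp_ite (v : X → ℝ) (hv1 : ∑ x, v x = 1) (E : Set X) (θ : ℝ) :
    ∑ x, v x * Real.exp (if x ∈ E then θ else 0) = 1 + (Real.exp θ - 1) * mass v E := by
  have hterm (x : X) : v x * Real.exp (if x ∈ E then θ else 0) =
      v x + (Real.exp θ - 1) * if x ∈ E then v x else 0 := by
    split_ifs
    · ring
    · rw [Real.exp_zero, mul_zero, add_zero, mul_one]
  simp only [hterm, sum_add_distrib, hv1, ← mul_sum, mass, sum_filter]

/- Chernoff's bound for adapted events; the sign of `exp θ - 1` lets one statement serve both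
tails, with `q t` an upper bound on the conditional mass for `θ ≥ 0` and a lower bound for
`θ ≤ 0`. -/
lemma mass_prodWeight_le_of_adapted (hw : ∀ t x, 0 ≤ w t x) (hw1 : ∀ t, ∑ x, w t x = 1)
    {A : ι → Set (ι → X)} (hA : ∀ s t, s < t → ∀ f x, Function.update f t x ∈ A s ↔ f ∈ A s)
    {θ : ℝ} {q : ι → ℝ} (hq : ∀ t f,
      (Real.exp θ - 1) * mass (w t) {x | Function.update f t x ∈ A t} ≤ (Real.exp θ - 1) * q t)
    {E : Set (ι → X)} {a : ℝ} (hE : ∀ f ∈ E, θ * a ≤ θ * eventCount A f) :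
    mass (prodWeight w) E ≤ Real.exp ((Real.exp θ - 1) * ∑ t, q t - θ * a) := by
  have hmoment : ∑ f, prodWeight w f * Real.exp (∑ t, if f ∈ A t then θ else 0) ≤
      Real.exp (∑ t, (Real.exp θ - 1) * q t) := by
    refine sum_prodWeight_mul_exp_sum_le (Y := fun t f => if f ∈ A t then θ else 0) hw hw1
      (fun s t hst f x => by simp only [hA s t hst f x]) (fun t f => ?_) univ
    have hstep := sum_mul_exp_ite (w t) (hw1 t) {x | Function.update f t x ∈ A t} θ
    simp only [Set.mem_ofPred_eq] at hstep
    rw [hstep]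
    linarith [hq t f, Real.add_one_le_exp ((Real.exp θ - 1) * q t)]
  have hcount (f : ι → X) : ∑ t, (if f ∈ A t then θ else 0) = θ * eventCount A f := by
    rw [← sum_filter, sum_const, nsmul_eq_mul, mul_comm, eventCount]
  simp only [hcount, ← mul_sum] at hmoment
  calc _ ≤ Real.exp (-(θ * a)) * ∑ f, prodWeight w f * Real.exp (θ * eventCount A f) :=
        mass_le_exp_neg_mul_sum (prodWeight_nonneg hw) _ hE
    _ ≤ Real.exp (-(θ * a)) * Real.exp ((Real.exp θ - 1) * ∑ t, q t) := by gcongr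
    _ = _ := by rw [← Real.exp_add]; ring_nf

end ProdWeight

section IIDCounts

variable {ι X : Type*} [Fintype ι] [DecidableEq ι] [Fintype X] {w : X → ℝ}

lemma mass_iid_le_exp (hw : ∀ x, 0 ≤ w x) (hw1 : ∑ x, w x = 1) (A : Set X) {θ : ℝ}
    {E : Set (ι → X)} {a : ℝ}
    (hE : ∀ f ∈ E, θ * a ≤ θ * eventCount (fun i => {f : ι → X | f i ∈ A}) f) :
    mass (prodWeight fun _ => w) E ≤
      Real.exp ((Real.exp θ - 1) * (Fintype.card ι * mass w A) - θ * a) := by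
  let _ : LinearOrder ι := LinearOrder.lift' (Fintype.equivFin ι) (Fintype.equivFin ι).injective
  have h := mass_prodWeight_le_of_adapted (fun _ => hw) (fun _ => hw1)
    (A := fun i => {f : ι → X | f i ∈ A}) (q := fun _ => mass w A)
    (fun s t hst f x => by simp [Function.update, hst.ne])
    (fun t f => by simp [Function.update])
    hE
  rw [sum_const, card_univ, nsmul_eq_mul] at h
  convert h

lemma mass_four_mul_lt_eventCount_le (hw : ∀ x, 0 ≤ w x) (hw1 : ∑ x, w x = 1) (A : Set X) {μ : ℝ}
    (hμ : Fintype.card ι * mass w A = μ) :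
    mass (prodWeight fun _ => w)
      {f | 4 * μ < eventCount (fun i => {f : ι → X | f i ∈ A}) f} ≤ Real.exp (-μ / 4) := by
  have hμ0 : 0 ≤ μ := hμ ▸ mul_nonneg (Nat.cast_nonneg _) (mass_nonneg hw)
  refine (mass_iid_le_exp hw hw1 A (θ := 1) (a := 4 * μ) fun f hf => ?_).trans ?_
  · linarith [show 4 * μ < _ from hf]
  · rw [hμ]
    exact Real.exp_le_exp.2 (by nlinarith [Real.exp_one_lt_d9])

lemma mass_eventCount_lt_div_four_le (hw : ∀ x, 0 ≤ w x) (hw1 : ∑ x, w x = 1) (A : Set X) {μ : ℝ}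
    (hμ : Fintype.card ι * mass w A = μ) :
    mass (prodWeight fun _ => w)
      {f | (eventCount (fun i => {f : ι → X | f i ∈ A}) f : ℝ) < μ / 4} ≤ Real.exp (-μ / 4) := by
  have hμ0 : 0 ≤ μ := hμ ▸ mul_nonneg (Nat.cast_nonneg _) (mass_nonneg hw)
  refine (mass_iid_le_exp hw hw1 A (θ := -1) (a := μ / 4) fun f hf => ?_).trans ?_
  · linarith [show _ < μ / 4 from hf]
  · rw [hμ]
    exact Real.exp_le_exp.2 (by nlinarith [Real.exp_neg_one_lt_d9])

end IIDCounts

section Candidates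

/-- The points that `f` sends to `b`: the servers caching a given file when `f` is a placement, the
requests for a given file when `f` is a sequence of requested files. -/
noncomputable def fiber {α β : Type*} [Fintype α] (f : α → β) (b : β) : Finset α :=
  univ.filter fun a => f a = b

lemma mem_fiber {α β : Type*} [Fintype α] {f : α → β} {a : α} {b : β} :
    a ∈ fiber f b ↔ f a = b := by
  simp only [fiber, mem_filter, mem_univ, true_and]

variable {V : Type*}

/-- The law of two independent uniform points of `C`, identically `0` when `C` is empty. -/
noncomputable def pairWeight (C : Finset V) (x : V × V) : ℝ :=
  if x.1 ∈ C ∧ x.2 ∈ C then 1 / (#C : ℝ) ^ 2 else 0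

lemma pairWeight_nonneg (C : Finset V) (x : V × V) : 0 ≤ pairWeight C x := by
  rw [pairWeight]
  split_ifs <;> positivity

variable [Fintype V]

lemma mass_pairWeight [DecidableEq V] (C H : Finset V) :
    mass (pairWeight C) {x | x.1 ∈ H ∧ x.2 ∈ H} = ((#(H ∩ C) : ℝ) / #C) ^ 2 := by
  calc mass (pairWeight C) {x | x.1 ∈ H ∧ x.2 ∈ H}
      = ∑ x, if x ∈ (H ∩ C) ×ˢ (H ∩ C) then 1 / (#C : ℝ) ^ 2 else 0 := by
        rw [mass, sum_filter]
        refine sum_congr rfl fun x _ => ?_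
        simp only [pairWeight, Set.mem_ofPred_eq, mem_product, mem_inter]
        split_ifs <;> first | rfl | tauto
    _ = _ := by
        rw [sum_ite_mem, univ_inter, sum_const, card_product, nsmul_eq_mul]
        push_cast
        ring

lemma sum_pairWeight {C : Finset V} (hC : C.Nonempty) : ∑ x, pairWeight C x = 1 := by
  have hcard : (#C : ℝ) ≠ 0 := Nat.cast_ne_zero.2 hC.card_pos.ne'
  have h := mass_pairWeight C univ
  simpa only [mass, mem_univ, and_self, Set.mem_ofPred_eq, filter_true, univ_inter,
    div_self hcard, one_pow] using h

lemma sum_pairWeight_le_one (C : Finset V) : ∑ x, pairWeight C x ≤ 1 := by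
  rcases C.eq_empty_or_nonempty with rfl | hC
  · simp [pairWeight]
  · exact (sum_pairWeight hC).le

variable {β : Type*} {n : ℕ}

/-- The law of the candidate pairs of all requests when nothing constrains their distance to the
origin: request `t` draws both candidates among the nodes that cache `file t`. -/
noncomputable def candidateWeight (cache : V → β) (file : Fin n → β) : (Fin n → V × V) → ℝ :=
  prodWeight fun t => pairWeight (fiber cache (file t))

lemma candidateWeight_nonneg (cache : V → β) (file : Fin n → β) (c : Fin n → V × V) :
    0 ≤ candidateWeight cache file c :=
  prodWeight_nonneg (fun _ => pairWeight_nonneg _) c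

lemma cache_eq_of_candidateWeight_ne_zero {cache : V → β} {file : Fin n → β} {c : Fin n → V × V}
    (hc : candidateWeight cache file c ≠ 0) (t : Fin n) :
    cache (c t).1 = file t ∧ cache (c t).2 = file t := by
  have h := apply_ne_zero_of_prodWeight_ne_zero hc t
  simp only [pairWeight, mem_fiber, ne_eq, ite_eq_right_iff, Classical.not_imp] at h
  exact h.1

lemma sum_candidateWeight {cache : V → β} {file : Fin n → β}
    (hC : ∀ t, (fiber cache (file t)).Nonempty) : ∑ c, candidateWeight cache file c = 1 := by
  simp only [candidateWeight, sum_prodWeight, sum_pairWeight (hC _), prod_const_one]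

end Candidates

section LoadProcess

variable {V : Type*} [DecidableEq V] {n : ℕ} {S : Finset V} {c : Fin n → V × V} {tb : Fin n → Bool}

lemma exists_loadsUpTo_succ (c : Fin n → V × V) (tb : Fin n → Bool) (t : Fin n) :
    ∃ w, (w = (c t).1 ∨ w = (c t).2) ∧
      loadsUpTo c tb t w ≤ loadsUpTo c tb t (c t).1 ∧
      loadsUpTo c tb t w ≤ loadsUpTo c tb t (c t).2 ∧
      ∀ v, loadsUpTo c tb (t + 1) v = loadsUpTo c tb t v + if v = w then 1 else 0 := by
  refine ⟨if loadsUpTo c tb t (c t).1 < loadsUpTo c tb t (c t).2 then (c t).1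
    else if loadsUpTo c tb t (c t).2 < loadsUpTo c tb t (c t).1 then (c t).2
    else if tb t then (c t).1 else (c t).2, ?_, ?_, ?_, fun v => ?_⟩
  · split_ifs <;> simp only [true_or, or_true]
  · split_ifs <;> omega
  · split_ifs <;> omega
  · simp only [loadsUpTo, dif_pos t.2, Fin.eta, add_ite, add_zero]

lemma loadsUpTo_update (c : Fin n → V × V) (tb : Fin n → Bool) (t : Fin n) (x : V × V) {s : ℕ}
    (hs : s ≤ t) : loadsUpTo (Function.update c t x) tb s = loadsUpTo c tb s := by
  induction s with
  | zero => rfl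
  | succ s ih =>
    have hne : (⟨s, by omega⟩ : Fin n) ≠ t := Fin.ne_of_lt hs
    funext v
    simp only [loadsUpTo, ih (by omega), Function.update_of_ne hne]

lemma loadsUpTo_mono (c : Fin n → V × V) (tb : Fin n → Bool) (v : V) :
    Monotone fun t => loadsUpTo c tb t v := by
  refine monotone_nat_of_le_succ fun t => ?_
  by_cases ht : t < n
  · obtain ⟨w, -, -, -, hstep⟩ := exists_loadsUpTo_succ c tb ⟨t, ht⟩
    exact (hstep v).symm ▸ Nat.le_add_right _ _
  · simp only [loadsUpTo, dif_neg ht, le_refl]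

/-- The nodes of `S` that hold at least `i` requests after the first `t` requests. -/
def loadedNodes (S : Finset V) (c : Fin n → V × V) (tb : Fin n → Bool) (i t : ℕ) : Finset V :=
  S.filter fun v => i ≤ loadsUpTo c tb t v

lemma loadedNodes_update (t : Fin n) (x : V × V) (i : ℕ) {s : ℕ} (hs : s ≤ t) :
    loadedNodes S (Function.update c t x) tb i s = loadedNodes S c tb i s := by
  rw [loadedNodes, loadedNodes, loadsUpTo_update c tb t x hs]

lemma card_loadedNodes_mono (S : Finset V) (c : Fin n → V × V) (tb : Fin n → Bool) (i : ℕ) :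
    Monotone fun t => #(loadedNodes S c tb i t) := fun _ _ hst =>
  card_le_card (monotone_filter_right S fun v _ hv => hv.trans (loadsUpTo_mono c tb v hst))

lemma card_loadedNodes_succ_le (S : Finset V) (c : Fin n → V × V) (tb : Fin n → Bool) (i t : ℕ) :
    #(loadedNodes S c tb (i + 1) t) ≤ ∑ v ∈ S, (loadsUpTo c tb t v - i) := by
  rw [loadedNodes, card_filter]
  refine sum_le_sum fun v _ => ?_
  split_ifs <;> omega

lemma mul_card_loadedNodes_le (S : Finset V) (c : Fin n → V × V) (tb : Fin n → Bool) (i t : ℕ) :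
    i * #(loadedNodes S c tb i t) ≤ ∑ v ∈ S, loadsUpTo c tb t v := by
  rw [loadedNodes, card_filter, mul_sum]
  refine sum_le_sum fun v _ => ?_
  split_ifs <;> omega

/-- The event that request `t` is forced onto a node of `S` that already holds `i` requests, because
both of its candidates are such nodes. The cap `b` on the number of these nodes is part of the event
so that its conditional probability given the past is always small. -/
def forcedHit (S : Finset V) (tb : Fin n → Bool) (i : ℕ) (b : ℝ) (t : Fin n) :
    Set (Fin n → V × V) :=
  {c | ((c t).1 ∈ loadedNodes S c tb i t ∧ (c t).2 ∈ loadedNodes S c tb i t) ∧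
    (#(loadedNodes S c tb i t) : ℝ) ≤ b}

lemma update_mem_forcedHit_iff (i : ℕ) (b : ℝ) {s t : Fin n} (hst : s < t) (x : V × V) :
    Function.update c t x ∈ forcedHit S tb i b s ↔ c ∈ forcedHit S tb i b s := by
  simp only [forcedHit, Set.mem_ofPred_eq, loadedNodes_update t x i hst.le,
    Function.update_of_ne hst.ne]

lemma update_self_mem_forcedHit_iff (i : ℕ) (b : ℝ) (t : Fin n) (x : V × V) :
    Function.update c t x ∈ forcedHit S tb i b t ↔
      (x.1 ∈ loadedNodes S c tb i t ∧ x.2 ∈ loadedNodes S c tb i t) ∧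
        (#(loadedNodes S c tb i t) : ℝ) ≤ b := by
  simp only [forcedHit, Set.mem_ofPred_eq, loadedNodes_update t x i le_rfl, Function.update_self]

lemma sum_excess_succ_le (hS : ∀ t, (c t).1 ∈ S ↔ (c t).2 ∈ S) (i : ℕ) (t : Fin n) :
    ∑ v ∈ S, (loadsUpTo c tb (t + 1) v - i) ≤ ∑ v ∈ S, (loadsUpTo c tb t v - i) +
      if (c t).1 ∈ loadedNodes S c tb i t ∧ (c t).2 ∈ loadedNodes S c tb i t then 1 else 0 := by
  obtain ⟨w, hw, hle₁, hle₂, hstep⟩ := exists_loadsUpTo_succ c tb t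
  have hforced (hwS : w ∈ S) (hwi : i ≤ loadsUpTo c tb t w) :
      (c t).1 ∈ loadedNodes S c tb i t ∧ (c t).2 ∈ loadedNodes S c tb i t := by
    have hmem : (c t).1 ∈ S ∧ (c t).2 ∈ S := by
      rcases hw with rfl | rfl
      · exact ⟨hwS, (hS t).1 hwS⟩
      · exact ⟨(hS t).2 hwS, hwS⟩
    exact ⟨mem_filter.2 ⟨hmem.1, hwi.trans hle₁⟩, mem_filter.2 ⟨hmem.2, hwi.trans hle₂⟩⟩
  calc _ ≤ ∑ v ∈ S, (loadsUpTo c tb t v - i + if v = w then (if (c t).1 ∈ loadedNodes S c tb i t ∧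
          (c t).2 ∈ loadedNodes S c tb i t then 1 else 0) else 0) := by
        refine sum_le_sum fun v hv => ?_
        rw [hstep v]
        by_cases hvw : v = w
        · subst hvw
          by_cases hvi : i ≤ loadsUpTo c tb t v
          · simp only [if_pos (hforced hv hvi), if_true]
            omega
          · simp only [if_true]
            omega
        · simp only [if_neg hvw, add_zero, le_refl]
    _ ≤ _ := by
        rw [sum_add_distrib, sum_ite_eq']
        split_ifs <;> omega

lemma le_sum_of_succ_le {f : ℕ → ℕ} {g : Fin n → ℕ} (h0 : f 0 = 0)
    (hstep : ∀ t : Fin n, f (t + 1) ≤ f t + g t) : f n ≤ ∑ t, g t := by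
  induction n with
  | zero => exact h0.le
  | succ n ih =>
    rw [Fin.sum_univ_castSucc]
    exact (hstep (Fin.last n)).trans (Nat.add_le_add_right (ih fun t => hstep t.castSucc) _)

lemma sum_excess_le_eventCount (hS : ∀ t, (c t).1 ∈ S ↔ (c t).2 ∈ S) {i : ℕ} {b : ℝ}
    (hb : (#(loadedNodes S c tb i n) : ℝ) ≤ b) :
    ∑ v ∈ S, (loadsUpTo c tb n v - i) ≤ eventCount (forcedHit S tb i b) c := by
  rw [eventCount, card_filter]
  refine le_sum_of_succ_le (f := fun t => ∑ v ∈ S, (loadsUpTo c tb t v - i))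
    (by simp only [loadsUpTo, zero_tsub, sum_const_zero]) fun t => ?_
  have hbt : (#(loadedNodes S c tb i t) : ℝ) ≤ b :=
    (Nat.cast_le.2 (card_loadedNodes_mono S c tb i t.2.le)).trans hb
  simpa only [forcedHit, Set.mem_ofPred_eq, hbt, and_true] using sum_excess_succ_le hS i t

lemma sum_loads_le (hS : ∀ t, (c t).1 ∈ S ↔ (c t).2 ∈ S) :
    ∑ v ∈ S, loadsUpTo c tb n v ≤ #(univ.filter fun t => (c t).1 ∈ S) := by
  refine (sum_excess_le_eventCount (tb := tb) (i := 0) hS le_rfl).trans (card_le_card ?_)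
  exact monotone_filter_right _ fun t _ ht => mem_of_mem_filter _ ht.1.1

/- Layered induction: at level `i₀ + s` at most `b s` nodes are loaded, which bounds the number of
requests forced to level `i₀ + s + 1`. -/
lemma load_le_of_forcedHit_counts (hS : ∀ t, (c t).1 ∈ S ↔ (c t).2 ∈ S) {b : ℕ → ℝ} {i₀ T k : ℕ}
    (h0 : (#(loadedNodes S c tb i₀ n) : ℝ) ≤ b 0)
    (hlayer : ∀ s < T, (eventCount (forcedHit S tb (i₀ + s) (b s)) c : ℝ) < b (s + 1))
    (hlast : eventCount (forcedHit S tb (i₀ + T) (b T)) c < k) {v : V} (hv : v ∈ S) :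
    loadsUpTo c tb n v ≤ i₀ + T + k := by
  have hcard (s : ℕ) (hs : s ≤ T) : (#(loadedNodes S c tb (i₀ + s) n) : ℝ) ≤ b s := by
    induction s with
    | zero => exact h0
    | succ s ih =>
      have hcount : #(loadedNodes S c tb (i₀ + s + 1) n) ≤
          eventCount (forcedHit S tb (i₀ + s) (b s)) c :=
        (card_loadedNodes_succ_le S c tb (i₀ + s) n).trans
          (sum_excess_le_eventCount hS (ih (Nat.le_of_succ_le hs)))
      exact (Nat.cast_le.2 hcount).trans (hlayer s hs).le
  have hexcess : loadsUpTo c tb n v - (i₀ + T) ≤ ∑ v ∈ S, (loadsUpTo c tb n v - (i₀ + T)) :=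
    single_le_sum (f := fun v => loadsUpTo c tb n v - (i₀ + T)) (fun _ _ => Nat.zero_le _) hv
  have := hexcess.trans (sum_excess_le_eventCount hS (hcard T le_rfl))
  omega

end LoadProcess

section Layers

/-- The cap on the number of servers of a file with `μ` expected requests that hold at least
`2048 + s` requests. Squaring gives doubly exponential decay; the floor `μ ^ (2 / 5)` keeps every
cap large enough for concentration. -/
noncomputable def layerBound (μ : ℝ) (s : ℕ) : ℝ :=
  max (μ * (1 / 2) ^ 2 ^ s / 256) (μ ^ (2 / 5 : ℝ))

/-- The number of layers, about `log₂ log₂ μ`, after which `layerBound μ` has reached its floor. -/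
noncomputable def layerCount (μ : ℝ) : ℕ := Nat.clog 2 (Nat.clog 2 ⌈μ⌉₊)

variable {μ : ℝ}

lemma le_two_pow_two_pow_layerCount (μ : ℝ) : μ ≤ 2 ^ 2 ^ layerCount μ := by
  have hceil : ⌈μ⌉₊ ≤ 2 ^ 2 ^ layerCount μ :=
    (Nat.le_pow_clog one_lt_two _).trans
      (Nat.pow_le_pow_right two_pos (Nat.le_pow_clog one_lt_two _))
  exact (Nat.le_ceil μ).trans (by exact_mod_cast hceil)

lemma layerCount_mono : Monotone layerCount := fun _ _ h =>
  Nat.clog_mono_right 2 (Nat.clog_mono_right 2 (Nat.ceil_mono h))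

lemma rpow_le_layerBound (μ : ℝ) (s : ℕ) : μ ^ (2 / 5 : ℝ) ≤ layerBound μ s := le_max_right _ _

lemma layerBound_layerCount (hμ : 1 ≤ μ) : layerBound μ (layerCount μ) = μ ^ (2 / 5 : ℝ) := by
  have hdecay : μ * (1 / 2) ^ 2 ^ layerCount μ ≤ 1 := by
    rw [one_div, inv_pow, ← div_eq_mul_inv]
    exact div_le_one_of_le₀ (le_two_pow_two_pow_layerCount μ) (by positivity)
  exact max_eq_right (by linarith [Real.one_le_rpow hμ (by norm_num : (0 : ℝ) ≤ 2 / 5)])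

lemma mul_sq_rpow_div_le (hμ : 2 ^ 20 ≤ μ) :
    256 * (μ ^ (2 / 5 : ℝ)) ^ 2 / μ ≤ μ ^ (2 / 5 : ℝ) := by
  have hμ0 : 0 < μ := lt_of_lt_of_le (by norm_num) hμ
  have hfloor : (256 : ℝ) ≤ μ ^ (3 / 5 : ℝ) :=
    calc (256 : ℝ) ≤ ((2 : ℝ) ^ (20 : ℕ)) ^ (3 / 5 : ℝ) := by
          rw [← Real.rpow_natCast, ← Real.rpow_mul (by norm_num)]
          norm_num
      _ ≤ _ := Real.rpow_le_rpow (by norm_num) hμ (by norm_num)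
  rw [div_le_iff₀ hμ0]
  calc 256 * (μ ^ (2 / 5 : ℝ)) ^ 2 ≤ μ ^ (3 / 5 : ℝ) * (μ ^ (2 / 5 : ℝ)) ^ 2 := by gcongr
    _ = μ ^ (2 / 5 : ℝ) * μ ^ (2 / 5 + 3 / 5 : ℝ) := by rw [Real.rpow_add hμ0]; ring
    _ = _ := by norm_num

lemma mul_sq_layerBound_div_le (hμ : 2 ^ 20 ≤ μ) (s : ℕ) :
    256 * layerBound μ s ^ 2 / μ ≤ layerBound μ (s + 1) := by
  have hμ0 : 0 < μ := lt_of_lt_of_le (by norm_num) hμ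
  rcases le_total (μ * (1 / 2) ^ 2 ^ s / 256) (μ ^ (2 / 5 : ℝ)) with h | h
  · rw [layerBound, max_eq_right h]
    exact (mul_sq_rpow_div_le hμ).trans (rpow_le_layerBound μ (s + 1))
  · rw [layerBound, max_eq_left h]
    refine le_max_of_le_left (le_of_eq ?_)
    rw [pow_succ 2 s, pow_mul]
    field_simp [hμ0.ne']

/-- A bound on the probability that one of the servers of a file with `μ` expected requests receives
more than `2048 + layerCount μ + k` of them. -/
noncomputable def overloadBound (k : ℕ) (μ : ℝ) : ℝ :=
  layerCount μ * Real.exp (-μ ^ (2 / 5 : ℝ) / 2) + Real.exp 64 * μ ^ (-(k : ℝ) / 5)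

end Layers

section Overload

variable {V β : Type*} [Fintype V] [DecidableEq V] {n : ℕ} {cache : V → β} {file : Fin n → β}
  {tb : Fin n → Bool} {j : β} {μ : ℝ}

lemma mass_update_mem_forcedHit_le (cache : V → β) (file : Fin n → β) (tb : Fin n → Bool) (j : β)
    (i : ℕ) (b : ℝ) (t : Fin n) (c : Fin n → V × V) :
    mass (pairWeight (fiber cache (file t)))
        {x | Function.update c t x ∈ forcedHit (fiber cache j) tb i b t} ≤
      if file t = j then (b / #(fiber cache j)) ^ 2 else 0 := by
  set H := loadedNodes (fiber cache j) c tb i t with hH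
  simp only [update_self_mem_forcedHit_iff, ← hH]
  by_cases hb : (#H : ℝ) ≤ b
  · simp only [hb, and_true]
    rw [mass_pairWeight]
    split_ifs with htj
    · have hcard : (#(H ∩ fiber cache (file t)) : ℝ) ≤ b :=
        (Nat.cast_le.2 (card_le_card inter_subset_left)).trans hb
      rw [htj] at hcard ⊢
      gcongr
    · have hempty : H ∩ fiber cache (file t) = ∅ := by
        refine eq_empty_of_forall_notMem fun v hv => htj ?_
        rw [mem_inter, mem_fiber] at hv
        rw [← hv.2, mem_fiber.1 (mem_of_mem_filter v hv.1)]
      simp [hempty]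
  · simp only [hb, and_false, mass, Set.mem_ofPred_eq, filter_false, sum_empty]
    split_ifs <;> positivity

lemma mass_le_eventCount_forcedHit_le (hC : ∀ t, (fiber cache (file t)).Nonempty)
    (tb : Fin n → Bool) (j : β) (i : ℕ) (b : ℝ) {θ : ℝ} (hθ : 0 ≤ θ) (a : ℝ) :
    mass (candidateWeight cache file)
        {c | a ≤ eventCount (forcedHit (fiber cache j) tb i b) c} ≤
      Real.exp ((Real.exp θ - 1) * (#(fiber file j) * (b / #(fiber cache j)) ^ 2) - θ * a) := by
  have hexp : 0 ≤ Real.exp θ - 1 := sub_nonneg.2 (Real.one_le_exp hθ)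
  have htail := mass_prodWeight_le_of_adapted (fun _ => pairWeight_nonneg _)
    (fun t => sum_pairWeight (hC t))
    (fun s t hst c x => update_mem_forcedHit_iff (S := fiber cache j) (tb := tb) i b hst x)
    (θ := θ) (q := fun t => if file t = j then (b / #(fiber cache j)) ^ 2 else 0)
    (fun t c => mul_le_mul_of_nonneg_left
      (mass_update_mem_forcedHit_le cache file tb j i b t c) hexp)
    (a := a) (fun c hc => mul_le_mul_of_nonneg_left hc hθ)
  rwa [← sum_filter, sum_const, nsmul_eq_mul] at htail

lemma mass_le_eventCount_forcedHit_le_of_card (hC : ∀ t, (fiber cache (file t)).Nonempty)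
    (tb : Fin n → Bool) (hμ : 0 < μ) (hserv : μ / 4 ≤ #(fiber cache j))
    (hreq : (#(fiber file j) : ℝ) ≤ 4 * μ) (i : ℕ) {b : ℝ} (hb : 0 ≤ b) {θ : ℝ} (hθ : 0 ≤ θ)
    (a : ℝ) :
    mass (candidateWeight cache file)
        {c | a ≤ eventCount (forcedHit (fiber cache j) tb i b) c} ≤
      Real.exp ((Real.exp θ - 1) * (64 * b ^ 2 / μ) - θ * a) := by
  have hexp : 0 ≤ Real.exp θ - 1 := sub_nonneg.2 (Real.one_le_exp hθ)
  have hmean : #(fiber file j) * (b / #(fiber cache j)) ^ 2 ≤ 64 * b ^ 2 / μ :=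
    calc #(fiber file j) * (b / #(fiber cache j)) ^ 2 ≤ 4 * μ * (b / (μ / 4)) ^ 2 := by gcongr
      _ = _ := by field_simp; ring
  refine (mass_le_eventCount_forcedHit_le hC tb j i b hθ a).trans ?_
  gcongr

lemma mass_layer_le (hC : ∀ t, (fiber cache (file t)).Nonempty) (tb : Fin n → Bool)
    (hμ : 2 ^ 20 ≤ μ) (hserv : μ / 4 ≤ #(fiber cache j)) (hreq : (#(fiber file j) : ℝ) ≤ 4 * μ)
    (i s : ℕ) :
    mass (candidateWeight cache file) {c | layerBound μ (s + 1) ≤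
        eventCount (forcedHit (fiber cache j) tb i (layerBound μ s)) c} ≤
      Real.exp (-μ ^ (2 / 5 : ℝ) / 2) := by
  have hμ0 : 0 < μ := lt_of_lt_of_le (by norm_num) hμ
  have hb0 : 0 ≤ layerBound μ s := (Real.rpow_nonneg hμ0.le _).trans (rpow_le_layerBound μ s)
  refine (mass_le_eventCount_forcedHit_le_of_card hC tb hμ0 hserv hreq i hb0 zero_le_one _).trans
    (Real.exp_le_exp.2 ?_)
  have hmean : 4 * (64 * layerBound μ s ^ 2 / μ) ≤ layerBound μ (s + 1) := by
    convert mul_sq_layerBound_div_le hμ s using 1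
    ring
  have hmean0 : 0 ≤ 64 * layerBound μ s ^ 2 / μ := by positivity
  nlinarith [Real.exp_one_lt_d9, rpow_le_layerBound μ (s + 1)]

lemma mass_last_layer_le (hC : ∀ t, (fiber cache (file t)).Nonempty) (tb : Fin n → Bool)
    (hμ : 1 ≤ μ) (hserv : μ / 4 ≤ #(fiber cache j)) (hreq : (#(fiber file j) : ℝ) ≤ 4 * μ)
    (i k : ℕ) :
    mass (candidateWeight cache file)
        {c | (k : ℝ) ≤ eventCount (forcedHit (fiber cache j) tb i (μ ^ (2 / 5 : ℝ))) c} ≤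
      Real.exp 64 * μ ^ (-(k : ℝ) / 5) := by
  have hμ0 : 0 < μ := one_pos.trans_le hμ
  have hθ : 0 ≤ Real.log μ / 5 := div_nonneg (Real.log_nonneg hμ) (by norm_num)
  refine (mass_le_eventCount_forcedHit_le_of_card hC tb hμ0 hserv hreq i
    (Real.rpow_nonneg hμ0.le _) hθ k).trans ?_
  have hexp : Real.exp (Real.log μ / 5) = μ ^ (1 / 5 : ℝ) := by
    rw [Real.rpow_def_of_pos hμ0]
    ring_nf
  have hmean : (Real.exp (Real.log μ / 5) - 1) * (64 * (μ ^ (2 / 5 : ℝ)) ^ 2 / μ) ≤ 64 :=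
    calc _ ≤ μ ^ (1 / 5 : ℝ) * (64 * (μ ^ (2 / 5 : ℝ)) ^ 2 / μ) := by
          gcongr
          linarith
      _ = 64 * μ ^ (1 / 5 + 2 / 5 + 2 / 5 : ℝ) / μ := by
          rw [Real.rpow_add hμ0, Real.rpow_add hμ0]
          ring
      _ = 64 := by norm_num [hμ0.ne']
  have hpow : μ ^ (-(k : ℝ) / 5) = Real.exp (-(Real.log μ / 5 * k)) := by
    rw [Real.rpow_def_of_pos hμ0]
    ring_nf
  rw [hpow, ← Real.exp_add]
  exact Real.exp_le_exp.2 (by linarith)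

lemma load_le_of_layerBound (hreq : (#(fiber file j) : ℝ) ≤ 4 * μ) {c : Fin n → V × V}
    (hc : candidateWeight cache file c ≠ 0) {T k : ℕ}
    (hlayer : ∀ s < T, (eventCount (forcedHit (fiber cache j) tb (2048 + s) (layerBound μ s)) c : ℝ)
      < layerBound μ (s + 1))
    (hlast : eventCount (forcedHit (fiber cache j) tb (2048 + T) (layerBound μ T)) c < k)
    {v : V} (hv : v ∈ fiber cache j) :
    loadsUpTo c tb n v ≤ 2048 + T + k := by
  have hcache := cache_eq_of_candidateWeight_ne_zero hc
  have hS (t : Fin n) : (c t).1 ∈ fiber cache j ↔ (c t).2 ∈ fiber cache j := by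
    rw [mem_fiber, mem_fiber, (hcache t).1, (hcache t).2]
  have hrequests : univ.filter (fun t => (c t).1 ∈ fiber cache j) = fiber file j := by
    ext t
    simp only [mem_filter, mem_univ, true_and, mem_fiber, (hcache t).1]
  refine load_le_of_forcedHit_counts hS ?_ hlayer hlast hv
  have hmarkov := (mul_card_loadedNodes_le _ c tb 2048 n).trans (sum_loads_le hS)
  rw [hrequests] at hmarkov
  have hfirst : 2048 * (#(loadedNodes (fiber cache j) c tb 2048 n) : ℝ) ≤ 4 * μ :=
    le_trans (by exact_mod_cast hmarkov) hreq
  exact le_max_of_le_left (by norm_num; linarith)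

lemma mass_overload_le (hC : ∀ t, (fiber cache (file t)).Nonempty) (tb : Fin n → Bool)
    (hμ : 2 ^ 20 ≤ μ) (hserv : μ / 4 ≤ #(fiber cache j)) (hreq : (#(fiber file j) : ℝ) ≤ 4 * μ)
    (k : ℕ) :
    mass (candidateWeight cache file)
        {c | ∃ v ∈ fiber cache j, 2048 + layerCount μ + k < loadsUpTo c tb n v} ≤
      overloadBound k μ := by
  set T := layerCount μ
  have hμ1 : 1 ≤ μ := le_trans (by norm_num) hμ
  have hw := candidateWeight_nonneg cache file
  let layer (s : ℕ) : Set (Fin n → V × V) := {c | layerBound μ (s + 1) ≤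
    eventCount (forcedHit (fiber cache j) tb (2048 + s) (layerBound μ s)) c}
  let last : Set (Fin n → V × V) :=
    {c | (k : ℝ) ≤ eventCount (forcedHit (fiber cache j) tb (2048 + T) (layerBound μ T)) c}
  have hsub (c) (hc : ∃ v ∈ fiber cache j, 2048 + T + k < loadsUpTo c tb n v)
      (hc0 : candidateWeight cache file c ≠ 0) : c ∈ {c | ∃ s ∈ range T, c ∈ layer s} ∪ last := by
    by_contra hgood
    simp only [Set.mem_union, Set.mem_ofPred_eq, mem_range, not_or, not_exists, not_and, layer,
      last, not_le, Nat.cast_lt] at hgood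
    obtain ⟨v, hv, hload⟩ := hc
    exact hload.not_ge (load_le_of_layerBound hreq hc0 hgood.1 hgood.2 hv)
  calc _ ≤ mass (candidateWeight cache file) ({c | ∃ s ∈ range T, c ∈ layer s} ∪ last) :=
        mass_mono_of_support hw hsub
    _ ≤ ∑ s ∈ range T, mass (candidateWeight cache file) (layer s) +
          mass (candidateWeight cache file) last :=
        (mass_union_le hw).trans (add_le_add_left (mass_iUnion_mem_le hw _ _) _)
    _ ≤ ∑ s ∈ range T, Real.exp (-μ ^ (2 / 5 : ℝ) / 2) + Real.exp 64 * μ ^ (-(k : ℝ) / 5) := by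
        gcongr with s
        · exact mass_layer_le hC tb hμ hserv hreq (2048 + s) s
        · simp only [last, T, layerBound_layerCount hμ1]
          exact mass_last_layer_le hC tb hμ1 hserv hreq _ k
    _ = _ := by rw [sum_const, card_range, nsmul_eq_mul, overloadBound]

lemma one_sub_le_mass_maxLoad_le (hC : ∀ t, (fiber cache (file t)).Nonempty) (tb : Fin n → Bool)
    (P : Finset β) (hcache : ∀ v, cache v ∈ P) (μ : β → ℝ) (hμ : ∀ j ∈ P, 2 ^ 20 ≤ μ j)
    (hserv : ∀ j ∈ P, μ j / 4 ≤ #(fiber cache j))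
    (hreq : ∀ j ∈ P, (#(fiber file j) : ℝ) ≤ 4 * μ j) {k L : ℕ}
    (hL : ∀ j ∈ P, 2048 + layerCount (μ j) + k ≤ L) :
    1 - ∑ j ∈ P, overloadBound k (μ j) ≤
      mass (candidateWeight cache file) {c | maxLoadII c tb ≤ L} := by
  have hw := candidateWeight_nonneg cache file
  have hbad : mass (candidateWeight cache file) {c | maxLoadII c tb ≤ L}ᶜ ≤
      ∑ j ∈ P, overloadBound k (μ j) :=
    calc _ ≤ mass (candidateWeight cache file) {c | ∃ j ∈ P, c ∈ {c : Fin n → V × V |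
            ∃ v ∈ fiber cache j, 2048 + layerCount (μ j) + k < loadsUpTo c tb n v}} := by
          refine mass_mono_of_support hw fun c hc _ => ?_
          simp only [maxLoadII, Set.mem_compl_iff, Set.mem_ofPred_eq, Finset.sup_le_iff, not_forall,
            not_le] at hc
          obtain ⟨v, -, hv⟩ := hc
          exact ⟨cache v, hcache v, v, mem_fiber.2 rfl, (hL _ (hcache v)).trans_lt hv⟩
      _ ≤ _ := (mass_iUnion_mem_le hw _ _).trans <| sum_le_sum fun j hj =>
          mass_overload_le hC tb (hμ j hj) (hserv j hj) (hreq j hj) k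
  linarith [mass_add_mass_compl (candidateWeight cache file) {c | maxLoadII c tb ≤ L},
    sum_candidateWeight hC]

end Overload

section StrategyII

variable {m M K n r : ℕ} {p : Fin K → ℝ}

/-- The law of the cache placement: every slot of every node is an independent draw from `p`. -/
def placementWeight (m M : ℕ) (p : Fin K → ℝ) : Placement m M K → ℝ :=
  prodWeight fun _ => prodWeight fun _ => p

/-- The law of a single request: a uniform origin and an independent file drawn from `p`. -/
noncomputable def requestWeight (m : ℕ) (p : Fin K → ℝ) (y : Node m × Fin K) : ℝ :=
  1 / ((m ^ 2 : ℕ) : ℝ) * p y.2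

lemma placementWeight_nonneg (hp : ∀ j, 0 ≤ p j) (ω : Placement m M K) :
    0 ≤ placementWeight m M p ω :=
  prodWeight_nonneg (fun _ => prodWeight_nonneg fun _ => hp) ω

lemma requestWeight_nonneg (hp : ∀ j, 0 ≤ p j) (y : Node m × Fin K) : 0 ≤ requestWeight m p y :=
  mul_nonneg (by positivity) (hp y.2)

lemma sum_requestWeight (m : ℕ) (p : Fin K → ℝ) :
    ∑ y, requestWeight m p y = ((m ^ 2 : ℕ) : ℝ) * ((m ^ 2 : ℕ) : ℝ)⁻¹ * ∑ j, p j := by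
  simp only [requestWeight, Fintype.sum_prod_type, ← mul_sum, sum_const, card_univ,
    Fintype.card_prod, Fintype.card_fin, nsmul_eq_mul, ← sq, one_div, mul_assoc]
  push_cast
  ring

lemma sum_requestWeight_eq_one (hm : 0 < m) (hp1 : ∑ j, p j = 1) :
    ∑ y, requestWeight m p y = 1 := by
  rw [sum_requestWeight, hp1, mul_one, mul_inv_cancel₀ (by positivity)]

lemma weightIIP_eq_compWeight (m M K r n : ℕ) (p : Fin K → ℝ) :
    weightIIP m M K r n p = compWeight (placementWeight m M p) fun ω =>
      compWeight (prodWeight fun _ => requestWeight m p) fun req =>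
        compWeight (prodWeight fun t => pairWeight (candSet ω (req t).1 (req t).2 r))
          fun _ _ => 1 / 2 ^ n := by
  funext x
  simp only [weightIIP, compWeight, placementWeight, requestWeight, prodWeight, pairWeight,
    prod_mul_distrib, prod_const, card_univ, Fintype.card_fin, mul_assoc,
    mul_comm (1 / 2 ^ n : ℝ)]
  congr!

lemma weightIIP_nonneg (hp : ∀ j, 0 ≤ p j) (x : SampleII m M K n) :
    0 ≤ weightIIP m M K r n p x := by
  rw [weightIIP_eq_compWeight]
  exact compWeight_nonneg (placementWeight_nonneg hp) (fun _ =>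
    compWeight_nonneg (prodWeight_nonneg fun _ => requestWeight_nonneg hp) fun _ =>
      compWeight_nonneg (prodWeight_nonneg fun _ => pairWeight_nonneg _)
        fun _ _ => by positivity) x

lemma sum_fair_bits (n : ℕ) : ∑ _tb : Fin n → Bool, (1 / 2 ^ n : ℝ) = 1 := by
  simp [Fintype.card_bool]

lemma probIIP_le_one (hp : ∀ j, 0 ≤ p j) (hp1 : ∑ j, p j ≤ 1) (E : Set (SampleII m M K n)) :
    probIIP m M K r n p E ≤ 1 := by
  refine (mass_le_sum (weightIIP_nonneg hp)).trans ?_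
  rw [weightIIP_eq_compWeight]
  have hplacement : ∑ ω, placementWeight m M p ω ≤ 1 :=
    sum_prodWeight_le_one (fun _ => prodWeight_nonneg fun _ => hp) fun _ =>
      sum_prodWeight_le_one (fun _ => hp) fun _ => hp1
  have hrequest : ∑ y, requestWeight m p y ≤ 1 := by
    rw [sum_requestWeight]
    exact mul_le_one₀ mul_inv_le_one (sum_nonneg fun j _ => hp j) hp1
  refine sum_compWeight_le_one (placementWeight_nonneg hp) hplacement fun ω => ?_
  refine sum_compWeight_le_one (prodWeight_nonneg fun _ => requestWeight_nonneg hp)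
    (sum_prodWeight_le_one (fun _ => requestWeight_nonneg hp) fun _ => hrequest) fun req => ?_
  exact sum_compWeight_le_one (prodWeight_nonneg fun _ => pairWeight_nonneg _)
    (sum_prodWeight_le_one (fun _ => pairWeight_nonneg _) fun _ => sum_pairWeight_le_one _)
    fun _ => (sum_fair_bits n).le

lemma candSet_eq_fiber (ω : Placement m 1 K) (u : Node m) (j : Fin K) :
    candSet ω u j (2 * m) = fiber (fun v => ω v 0) j := by
  ext v
  have hcdist (a b : Fin m) : cdist a b ≤ m := (min_le_left _ _).trans (Nat.mod_lt _ a.pos).le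
  have hdist : torusDist u v ≤ 2 * m := by
    rw [torusDist]
    linarith [hcdist u.1 v.1, hcdist u.2 v.2]
  simp only [candSet, mem_filter, mem_univ, true_and, hdist, and_true, cached, mem_fiber,
    Unique.exists_iff, Fin.default_eq_zero]

lemma card_node (m : ℕ) : Fintype.card (Node m) = m ^ 2 := by
  simp [sq]

lemma mass_few_servers_le (hp : ∀ j, 0 ≤ p j) (hp1 : ∑ j, p j = 1) (j : Fin K) :
    mass (placementWeight m 1 p)
        {ω | (#(fiber (fun v => ω v 0) j) : ℝ) < p j * ((m ^ 2 : ℕ) : ℝ) / 4} ≤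
      Real.exp (-(p j * ((m ^ 2 : ℕ) : ℝ)) / 4) := by
  have hslot : mass (prodWeight fun _ : Fin 1 => p) {y | y 0 = j} = p j := by
    rw [mass, sum_filter, Fintype.sum_equiv (Equiv.funUnique (Fin 1) (Fin K)) _
      (fun i => if i = j then p i else 0) fun y => by simp [prodWeight]]
    simp
  have h := mass_eventCount_lt_div_four_le (ι := Node m) (μ := p j * ((m ^ 2 : ℕ) : ℝ))
    (prodWeight_nonneg fun _ : Fin 1 => hp) (sum_prodWeight_const hp1) {y | y 0 = j}
    (by rw [hslot, card_node, mul_comm])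
  simpa only [eventCount, Set.mem_ofPred_eq, fiber, placementWeight] using h

lemma mass_many_requests_le (hm : 0 < m) (hp : ∀ j, 0 ≤ p j) (hp1 : ∑ j, p j = 1) (j : Fin K) :
    mass (prodWeight fun _ : Fin n => requestWeight m p)
        {req | 4 * (p j * n) < #(fiber (fun t => (req t).2) j)} ≤ Real.exp (-(p j * n) / 4) := by
  have hm2 : ((m ^ 2 : ℕ) : ℝ) ≠ 0 := by positivity
  have hfile : mass (requestWeight m p) {y | y.2 = j} = p j := by
    simp only [mass, sum_filter, Set.mem_ofPred_eq, Fintype.sum_prod_type, requestWeight,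
      sum_ite_eq', mem_univ, if_true, sum_const, card_univ, Fintype.card_prod, Fintype.card_fin,
      nsmul_eq_mul, ← sq, ← mul_assoc, mul_one_div_cancel hm2, one_mul]
  have h := mass_four_mul_lt_eventCount_le (ι := Fin n) (μ := p j * n)
    (requestWeight_nonneg hp) (sum_requestWeight_eq_one hm hp1) {y | y.2 = j}
    (by rw [hfile, Fintype.card_fin, mul_comm])
  simpa only [eventCount, Set.mem_ofPred_eq, fiber] using h

lemma mass_compl_servers_le (hp : ∀ j, 0 ≤ p j) (hp1 : ∑ j, p j = 1) :
    mass (placementWeight m 1 p) {ω | ∀ j, 0 < p j →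
        p j * ((m ^ 2 : ℕ) : ℝ) / 4 ≤ #(fiber (fun v => ω v 0) j)}ᶜ ≤
      ∑ j with 0 < p j, Real.exp (-(p j * ((m ^ 2 : ℕ) : ℝ)) / 4) := by
  refine (mass_compl_forall_le (placementWeight_nonneg hp) _ _).trans <|
    sum_le_sum fun j _ => ?_
  simpa only [not_le] using mass_few_servers_le hp hp1 j

lemma mass_compl_requests_le (hm : 0 < m) (hp : ∀ j, 0 ≤ p j) (hp1 : ∑ j, p j = 1) :
    mass (prodWeight fun _ : Fin n => requestWeight m p) {req | ∀ j, 0 < p j →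
        (#(fiber (fun t => (req t).2) j) : ℝ) ≤ 4 * (p j * n)}ᶜ ≤
      ∑ j with 0 < p j, Real.exp (-(p j * n) / 4) := by
  refine (mass_compl_forall_le (prodWeight_nonneg fun _ => requestWeight_nonneg hp) _ _).trans <|
    sum_le_sum fun j _ => ?_
  simpa only [not_le] using mass_many_requests_le hm hp hp1 j

lemma overloadBound_nonneg (k : ℕ) {μ : ℝ} (hμ : 0 ≤ μ) : 0 ≤ overloadBound k μ :=
  add_nonneg (by positivity) (by positivity)

lemma one_sub_le_mass_of_placement (hm : 0 < m) (hp : ∀ j, 0 ≤ p j) (hp1 : ∑ j, p j = 1)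
    (hμ : ∀ j, 0 < p j → 2 ^ 20 ≤ p j * n) {ω : Placement m 1 K} (hω : ∀ v, 0 < p (ω v 0))
    (hserv : ∀ j, 0 < p j → p j * n / 4 ≤ #(fiber (fun v => ω v 0) j)) {k L : ℕ}
    (hL : ∀ j, 2048 + layerCount (p j * n) + k ≤ L) :
    1 - ∑ j with 0 < p j, (Real.exp (-(p j * n) / 4) + overloadBound k (p j * n)) ≤
      mass (compWeight (prodWeight fun _ : Fin n => requestWeight m p) fun req =>
        compWeight (prodWeight fun t => pairWeight (candSet ω (req t).1 (req t).2 (2 * m)))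
          fun _ _ => 1 / 2 ^ n) {x | maxLoadII x.2.1 x.2.2 ≤ L} := by
  have hw := requestWeight_nonneg (m := m) hp
  have hμ0 (j : Fin K) : 0 ≤ p j * n := mul_nonneg (hp j) n.cast_nonneg
  let G : Set (Fin n → Node m × Fin K) :=
    {req | ∀ j, 0 < p j → (#(fiber (fun t => (req t).2) j) : ℝ) ≤ 4 * (p j * n)}
  have hbad : mass (prodWeight fun _ : Fin n => requestWeight m p) Gᶜ ≤
      ∑ j with 0 < p j, Real.exp (-(p j * n) / 4) :=
    mass_compl_requests_le hm hp hp1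
  rw [sum_add_distrib, add_comm]
  refine le_trans (sub_le_sub_left (add_le_add_right hbad _) 1) <|
    one_sub_le_mass_compWeight (prodWeight_nonneg fun _ => hw)
      (sum_prodWeight_const (sum_requestWeight_eq_one hm hp1))
      (fun req => compWeight_nonneg (prodWeight_nonneg fun _ => pairWeight_nonneg _)
        fun _ _ => by positivity)
      (sum_nonneg fun j _ => overloadBound_nonneg k (hμ0 j)) fun req hreq hreq0 => ?_
  have hsupport (t : Fin n) : 0 < p (req t).2 :=
    (hp _).lt_of_ne' (right_ne_zero_of_mul (apply_ne_zero_of_prodWeight_ne_zero hreq0 t))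
  simp only [candSet_eq_fiber]
  refine le_mass_compWeight_const (fun _ => by positivity) (sum_fair_bits n) fun tb => ?_
  refine one_sub_le_mass_maxLoad_le (fun t => ?_) tb _ (by simpa using hω) (fun j => p j * n)
    (by simpa using hμ) (by simpa using hserv) (by simpa [G] using hreq) fun j _ => hL j
  have hpos : (0 : ℝ) < #(fiber (fun v => ω v 0) (req t).2) := by
    linarith [hserv _ (hsupport t), hμ _ (hsupport t)]
  exact card_pos.1 (by exact_mod_cast hpos)

lemma one_sub_le_probIIP (hm : 0 < m) (hp : ∀ j, 0 ≤ p j) (hp1 : ∑ j, p j = 1)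
    (hμ : ∀ j, 0 < p j → 2 ^ 20 ≤ p j * ((m ^ 2 : ℕ) : ℝ)) (k : ℕ) :
    1 - ∑ j with 0 < p j, (2 * Real.exp (-(p j * ((m ^ 2 : ℕ) : ℝ)) / 4) +
        overloadBound k (p j * ((m ^ 2 : ℕ) : ℝ))) ≤
      probIIP m 1 K (2 * m) (m ^ 2) p
        {x | maxLoadII x.2.2.1 x.2.2.2 ≤ 2048 + layerCount ((m ^ 2 : ℕ) : ℝ) + k} := by
  set N := m ^ 2
  have hw := placementWeight_nonneg (m := m) (M := 1) hp
  have hμ0 (j : Fin K) : 0 ≤ p j * N := mul_nonneg (hp j) N.cast_nonneg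
  let G : Set (Placement m 1 K) :=
    {ω | ∀ j, 0 < p j → p j * N / 4 ≤ #(fiber (fun v => ω v 0) j)}
  have hbad : mass (placementWeight m 1 p) Gᶜ ≤
      ∑ j with 0 < p j, Real.exp (-(p j * N) / 4) :=
    mass_compl_servers_le hp hp1
  have hsplit (j : Fin K) : 2 * Real.exp (-(p j * N) / 4) + overloadBound k (p j * N) =
      Real.exp (-(p j * N) / 4) + overloadBound k (p j * N) + Real.exp (-(p j * N) / 4) := by ring
  have hlayer (j : Fin K) : layerCount (p j * N) ≤ layerCount N :=
    layerCount_mono <| mul_le_of_le_one_left N.cast_nonneg <|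
      hp1 ▸ single_le_sum (fun i _ => hp i) (mem_univ j)
  simp only [hsplit]
  rw [sum_add_distrib, probIIP, ← mass, weightIIP_eq_compWeight]
  refine le_trans (sub_le_sub_left (add_le_add_right hbad _) 1) <|
    one_sub_le_mass_compWeight hw
      (sum_prodWeight_const (sum_prodWeight_const hp1))
      (fun ω => compWeight_nonneg (prodWeight_nonneg fun _ => requestWeight_nonneg hp) fun _ =>
        compWeight_nonneg (prodWeight_nonneg fun _ => pairWeight_nonneg _)
          fun _ _ => by positivity)
      (sum_nonneg fun j _ => add_nonneg (Real.exp_pos _).le (overloadBound_nonneg k (hμ0 j)))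
      fun ω hω hω0 => ?_
  have hsupport (v : Node m) : 0 < p (ω v 0) :=
    (hp _).lt_of_ne' (apply_ne_zero_of_prodWeight_ne_zero
      (apply_ne_zero_of_prodWeight_ne_zero hω0 v) 0)
  exact one_sub_le_mass_of_placement hm hp hp1 hμ hsupport hω fun j => by
    gcongr
    exact hlayer j

end StrategyII

section Asymptotics

lemma layerCount_le_two_mul {μ : ℝ} (hμ : 1 ≤ μ) : (layerCount μ : ℝ) ≤ 2 * μ := by
  have hclog (x : ℕ) : Nat.clog 2 x ≤ x := Nat.clog_le_of_le_pow Nat.lt_two_pow_self.le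
  have hceil : layerCount μ ≤ ⌈μ⌉₊ := (hclog _).trans (hclog _)
  linarith [Nat.ceil_lt_add_one (zero_le_one.trans hμ), (Nat.cast_le (α := ℝ)).2 hceil]

lemma overloadBound_isBigO {c : ℝ} {k : ℕ} (hk : 5 * c ≤ k) :
    overloadBound k =O[atTop] fun μ => μ ^ (-c) := by
  have hcount : (fun μ => (layerCount μ : ℝ)) =O[atTop] fun μ => μ := by
    refine .of_bound 2 ?_
    filter_upwards [eventually_ge_atTop 1] with μ hμ
    rw [Real.norm_natCast, Real.norm_of_nonneg (by linarith)]
    exact layerCount_le_two_mul hμ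
  have hexp : (fun μ : ℝ => Real.exp (-μ ^ (2 / 5 : ℝ) / 2)) =O[atTop] fun μ => μ ^ (-c - 1) := by
    have h := (isLittleO_exp_neg_mul_rpow_atTop (a := 1 / 2) (by norm_num)
      ((-c - 1) * (5 / 2))).comp_tendsto (tendsto_rpow_atTop (y := 2 / 5) (by norm_num))
    refine h.isBigO.congr' (.of_forall fun μ => ?_) ?_
    · simp only [Function.comp_apply]
      ring_nf
    · filter_upwards [eventually_ge_atTop 0] with μ hμ
      rw [Function.comp_apply, ← Real.rpow_mul hμ]
      ring_nf
  have hlast : (fun μ : ℝ => μ ^ (-(k : ℝ) / 5)) =O[atTop] fun μ => μ ^ (-c) := by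
    refine .of_bound' ?_
    filter_upwards [eventually_ge_atTop 1] with μ hμ
    rw [Real.norm_of_nonneg (by positivity), Real.norm_of_nonneg (by positivity)]
    exact Real.rpow_le_rpow_of_exponent_le hμ (by linarith)
  refine ((hcount.mul hexp).congr' .rfl ?_).add (hlast.const_mul_left _)
  filter_upwards [eventually_gt_atTop 0] with μ hμ
  rw [Real.rpow_sub_one hμ.ne', mul_div_cancel₀ _ hμ.ne']

lemma two_mul_exp_add_overloadBound_isBigO {c : ℝ} {k : ℕ} (hk : 5 * c ≤ k) :
    (fun μ => 2 * Real.exp (-μ / 4) + overloadBound k μ) =O[atTop] fun μ => μ ^ (-c) := by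
  have hexp := (isLittleO_exp_neg_mul_rpow_atTop (a := 1 / 4) (by norm_num) (-c)).isBigO
  refine .add (.const_mul_left (hexp.congr_left fun μ => ?_) 2) (overloadBound_isBigO hk)
  ring_nf

lemma clog_two_le {x : ℕ} (hx : 1 ≤ x) : (Nat.clog 2 x : ℝ) ≤ 2 * Real.log x + 1 := by
  have hx1 : (1 : ℝ) ≤ x := Nat.one_le_cast.2 hx
  have hlogb : Real.logb 2 x ≤ 2 * Real.log x := by
    rw [Real.logb, div_le_iff₀ (Real.log_pos one_lt_two)]
    nlinarith [Real.log_nonneg hx1, Real.log_two_gt_d9]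
  rw [← Real.natCeil_logb_natCast]
  exact (Nat.ceil_lt_add_one (Real.logb_nonneg one_lt_two hx1)).le.trans (by simpa using hlogb)

lemma tendsto_log_log_natCast : Tendsto (fun n : ℕ => Real.log (Real.log n)) atTop atTop :=
  Real.tendsto_log_atTop.comp (Real.tendsto_log_atTop.comp tendsto_natCast_atTop_atTop)

lemma layerCount_natCast_isBigO :
    (fun n : ℕ => (layerCount n : ℝ)) =O[atTop] fun n => Real.log (Real.log n) := by
  refine .of_bound 7 ?_
  filter_upwards [tendsto_log_log_natCast.eventually_ge_atTop 1,
    (Real.tendsto_log_atTop.comp tendsto_natCast_atTop_atTop).eventually_ge_atTop 1,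
    eventually_ge_atTop 2] with n hloglog (hlog : 1 ≤ Real.log n) hn
  have hclog : 1 ≤ Nat.clog 2 n := Nat.clog_pos one_lt_two hn
  have hlogclog : Real.log (Nat.clog 2 n) ≤ Real.log 3 + Real.log (Real.log n) := by
    rw [← Real.log_mul (by norm_num) (by positivity)]
    exact Real.log_le_log (by exact_mod_cast hclog) (by linarith [clog_two_le (by omega : 1 ≤ n)])
  rw [Real.norm_natCast, Real.norm_of_nonneg (by linarith), layerCount, Nat.ceil_natCast]
  linarith [clog_two_le hclog, Real.log_le_sub_one_of_pos (by norm_num : (0 : ℝ) < 3)]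

lemma exists_layerCount_add_le_mul_log_log (b : ℕ) :
    ∃ C : ℝ, 0 < C ∧ ∀ᶠ n : ℕ in atTop, (layerCount n : ℝ) + b ≤ C * Real.log (Real.log n) := by
  have hconst : (fun _ : ℕ => (b : ℝ)) =O[atTop] fun n : ℕ => Real.log (Real.log n) :=
    (isLittleO_const_left.2 <| .inr <|
      tendsto_norm_atTop_atTop.comp tendsto_log_log_natCast).isBigO
  obtain ⟨C, hC, hbound⟩ := (layerCount_natCast_isBigO.add hconst).exists_pos
  refine ⟨C, hC, ?_⟩
  filter_upwards [hbound.bound, tendsto_log_log_natCast.eventually_ge_atTop 0] with n hn hloglog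
  rw [Real.norm_of_nonneg hloglog] at hn
  exact (le_abs_self _).trans hn

variable {α : Type*} {l : Filter α} {ι : α → Type*} [∀ a, Fintype (ι a)] {μ : ∀ a, ι a → ℝ} {c : ℝ}

lemma eventually_le_of_tendsto_sum_rpow_neg (hμ : ∀ a j, 0 ≤ μ a j) (hc : 0 < c)
    (hsum : Tendsto (fun a => ∑ j, μ a j ^ (-c)) l (𝓝 0)) (x : ℝ) :
    ∀ᶠ a in l, ∀ j, 0 < μ a j → x ≤ μ a j := by
  have hx : 0 < max x 1 := lt_max_of_lt_right one_pos
  filter_upwards [hsum.eventually_lt_const (Real.rpow_pos_of_pos hx (-c))] with a ha j hj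
  by_contra! hlt
  have hterm : μ a j ^ (-c) ≤ ∑ i, μ a i ^ (-c) :=
    single_le_sum (fun i _ => Real.rpow_nonneg (hμ a i) _) (mem_univ j)
  have hanti : max x 1 ^ (-c) ≤ μ a j ^ (-c) :=
    Real.rpow_le_rpow_of_nonpos hj (hlt.le.trans (le_max_left _ _)) (neg_nonpos.2 hc.le)
  linarith

/- The sum is over the positive `μ a j` only, because `0 ^ (-c) = 0` keeps the hypothesis from
controlling `F 0`. -/
lemma tendsto_sum_pos_of_isBigO_rpow_neg (hμ : ∀ a j, 0 ≤ μ a j) (hc : 0 < c)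
    (hsum : Tendsto (fun a => ∑ j, μ a j ^ (-c)) l (𝓝 0)) {F : ℝ → ℝ}
    (hF : F =O[atTop] fun x => x ^ (-c)) :
    Tendsto (fun a => ∑ j with 0 < μ a j, F (μ a j)) l (𝓝 0) := by
  obtain ⟨B, hB, hbound⟩ := hF.exists_pos
  obtain ⟨x, hx⟩ := eventually_atTop.1 hbound.bound
  refine squeeze_zero_norm' ?_ (by simpa only [mul_zero] using hsum.const_mul B)
  filter_upwards [eventually_le_of_tendsto_sum_rpow_neg hμ hc hsum x] with a ha
  calc ‖∑ j with 0 < μ a j, F (μ a j)‖ ≤ ∑ j with 0 < μ a j, B * μ a j ^ (-c) := by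
        refine norm_sum_le_of_le _ fun j hj => ?_
        have h := hx _ (ha j (mem_filter.1 hj).2)
        rwa [Real.norm_of_nonneg (Real.rpow_nonneg (hμ a j) _)] at h
    _ ≤ ∑ j, B * μ a j ^ (-c) := sum_le_univ_sum_of_nonneg fun j =>
        mul_nonneg hB.le (Real.rpow_nonneg (hμ a j) _)
    _ = B * ∑ j, μ a j ^ (-c) := (mul_sum _ _ _).symm

end Asymptotics

theorem exists_tendsto_probIIP_maxLoad_le_log_log {K : ℕ → ℕ} {p : ∀ m, Fin (K m) → ℝ}
    (hp : ∀ m j, 0 ≤ p m j) (hp1 : ∀ m, 0 < m → ∑ j, p m j = 1) {c : ℝ} (hc : 0 < c)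
    (hsum : Tendsto (fun m => ∑ j, (p m j * ((m ^ 2 : ℕ) : ℝ)) ^ (-c)) atTop (𝓝 0)) :
    ∃ C : ℝ, 0 < C ∧ Tendsto (fun m => probIIP m 1 (K m) (2 * m) (m ^ 2) (p m)
      {x | (maxLoadII x.2.2.1 x.2.2.2 : ℝ) ≤ C * Real.log (Real.log ((m ^ 2 : ℕ) : ℝ))})
      atTop (𝓝 1) := by
  obtain ⟨k, hk⟩ := exists_nat_ge (5 * c)
  obtain ⟨C, hC, hbound⟩ := exists_layerCount_add_le_mul_log_log (2048 + k)
  have hμ (m : ℕ) (j : Fin (K m)) : 0 ≤ p m j * ((m ^ 2 : ℕ) : ℝ) :=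
    mul_nonneg (hp m j) (Nat.cast_nonneg _)
  have herror := tendsto_sum_pos_of_isBigO_rpow_neg hμ hc hsum
    (two_mul_exp_add_overloadBound_isBigO hk)
  refine ⟨C, hC, tendsto_of_tendsto_of_tendsto_of_le_of_le'
    (by simpa only [sub_zero] using herror.const_sub 1) tendsto_const_nhds ?_ ?_⟩
  · filter_upwards [eventually_gt_atTop 0, (tendsto_pow_atTop two_ne_zero).eventually hbound,
      eventually_le_of_tendsto_sum_rpow_neg hμ hc hsum (2 ^ 20)] with m hm hload hlarge
    have hpos (j : Fin (K m)) : 0 < p m j * ((m ^ 2 : ℕ) : ℝ) ↔ 0 < p m j :=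
      mul_pos_iff_of_pos_right (by positivity)
    simp only [hpos] at hlarge ⊢
    refine (one_sub_le_probIIP hm (hp m) (hp1 m hm) hlarge k).trans <|
      mass_mono_of_support (weightIIP_nonneg (hp m)) fun x hx _ => le_trans ?_ hload
    exact_mod_cast hx.trans (by omega)
  · filter_upwards [eventually_gt_atTop 0] with m hm
    exact probIIP_le_one (hp m) (hp1 m hm).le _

section Popularity

lemma exists_tendsto_sum_rpow_neg {K : ℕ → ℕ} {κ a B : ℝ}
    (hK : (fun n => (K n : ℝ)) =O[atTop] fun n => (n : ℝ) ^ κ) (hκ : κ < 1) (ha : 0 ≤ a)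
    (haκ : a * κ < 1) (hB : 0 < B) {q : ∀ n, Fin (K n) → ℝ}
    (hq : ∀ n j, B * (K n : ℝ) ^ (-a) ≤ q n j) :
    ∃ c : ℝ, 0 < c ∧ Tendsto (fun n : ℕ => ∑ j, (q n j * n) ^ (-c)) atTop (𝓝 0) := by
  set c := (1 - a * κ)⁻¹
  have hc : 0 < c := inv_pos.2 (sub_pos.2 haκ)
  have hexponent : κ * (1 + a * c) + -c = -(1 - κ) := by
    have hcancel : c * (1 - a * κ) = 1 := inv_mul_cancel₀ (sub_pos.2 haκ).ne'
    linear_combination -hcancel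
  have hac : 0 < 1 + a * c := by positivity
  have hdecay : Tendsto (fun n : ℕ => B ^ (-c) * ((K n : ℝ) ^ (1 + a * c) * (n : ℝ) ^ (-c)))
      atTop (𝓝 0) := by
    have hpow := (hK.rpow hac.le (.of_forall fun n => by positivity)).mul
      (isBigO_refl (fun n : ℕ => (n : ℝ) ^ (-c)) atTop)
    refine (hpow.const_mul_left _).trans_tendsto <|
      ((tendsto_rpow_neg_atTop (sub_pos.2 hκ)).comp tendsto_natCast_atTop_atTop).congr' ?_
    filter_upwards [eventually_gt_atTop 0] with n hn
    have hn0 : (0 : ℝ) < n := Nat.cast_pos.2 hn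
    rw [Function.comp_apply, ← Real.rpow_mul hn0.le, ← Real.rpow_add hn0, hexponent]
  refine ⟨c, hc, squeeze_zero' (.of_forall fun n => sum_nonneg fun j _ => ?_) ?_ hdecay⟩
  · exact Real.rpow_nonneg (mul_nonneg (le_trans (by positivity) (hq n j)) n.cast_nonneg) _
  · filter_upwards [eventually_gt_atTop 0] with n hn
    have hn0 : (0 : ℝ) < n := Nat.cast_pos.2 hn
    calc ∑ j, (q n j * n) ^ (-c) ≤ ∑ _j : Fin (K n), (B * (K n : ℝ) ^ (-a) * n) ^ (-c) := by
          refine sum_le_sum fun j _ => ?_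
          have hKn : (0 : ℝ) < K n := Nat.cast_pos.2 j.pos
          exact Real.rpow_le_rpow_of_nonpos (by positivity) (by gcongr; exact hq n j)
            (neg_nonpos.2 hc.le)
      _ = _ := by
          rw [sum_const, card_univ, Fintype.card_fin, nsmul_eq_mul,
            Real.mul_rpow (by positivity) hn0.le, Real.mul_rpow hB.le (by positivity),
            ← Real.rpow_mul (Nat.cast_nonneg _), neg_mul_neg,
            Real.rpow_add' (Nat.cast_nonneg _) hac.ne', Real.rpow_one]
          ring

lemma sum_inv_rpow_le {γ s : ℝ} (hγ : 1 ≤ γ) (hs : 0 < s) {K : ℕ} (hK : 0 < K) :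
    ∑ i : Fin K, (((i.val + 1 : ℕ) : ℝ) ^ γ)⁻¹ ≤ (1 + 1 / s) * (K : ℝ) ^ s := by
  have hK1 : (1 : ℝ) ≤ K := Nat.one_le_cast.2 hK
  calc ∑ i : Fin K, (((i.val + 1 : ℕ) : ℝ) ^ γ)⁻¹ ≤ ∑ i : Fin K, (((i.val + 1 : ℕ) : ℝ))⁻¹ := by
        gcongr with i
        exact Real.self_le_rpow_of_one_le (by simp) hγ
    _ = harmonic K := by
        rw [Fin.sum_univ_eq_sum_range fun i => (((i + 1 : ℕ) : ℝ))⁻¹, harmonic]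
        push_cast
        rfl
    _ ≤ 1 + Real.log K := harmonic_le_one_add_log K
    _ ≤ (K : ℝ) ^ s + (K : ℝ) ^ s / s :=
        add_le_add (Real.one_le_rpow hK1 hs.le) (Real.log_le_rpow_div (Nat.cast_nonneg K) hs)
    _ = _ := by ring

lemma le_zipfP {γ s : ℝ} (hγ : 1 ≤ γ) (hs : 0 < s) {K : ℕ} (j : Fin K) :
    (1 + 1 / s)⁻¹ * (K : ℝ) ^ (-(γ + s)) ≤ zipfP K γ j := by
  have hK : (0 : ℝ) < K := Nat.cast_pos.2 j.pos
  have hsum : 0 < ∑ i : Fin K, (((i.val + 1 : ℕ) : ℝ) ^ γ)⁻¹ :=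
    sum_pos (fun i _ => by positivity) ⟨j, mem_univ j⟩
  calc (1 + 1 / s)⁻¹ * (K : ℝ) ^ (-(γ + s)) = ((K : ℝ) ^ γ)⁻¹ / ((1 + 1 / s) * (K : ℝ) ^ s) := by
        rw [neg_add, Real.rpow_add hK, Real.rpow_neg hK.le, Real.rpow_neg hK.le]
        field_simp
    _ ≤ zipfP K γ j := by
        rw [zipfP]
        gcongr
        · exact j.isLt
        · exact sum_inv_rpow_le hγ hs j.pos

variable {K : ℕ → ℕ} {ε : ℝ}

lemma exists_tendsto_sum_uniform_rpow_neg (hε : 0 < ε)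
    (hK : (fun n => (K n : ℝ)) =O[atTop] fun n => (n : ℝ) ^ (1 - ε)) :
    ∃ c : ℝ, 0 < c ∧
      Tendsto (fun n : ℕ => ∑ _j : Fin (K n), ((K n : ℝ)⁻¹ * n) ^ (-c)) atTop (𝓝 0) :=
  exists_tendsto_sum_rpow_neg (q := fun n _ => (K n : ℝ)⁻¹) hK (by linarith) zero_le_one
    (by linarith) one_pos fun n _ => by rw [Real.rpow_neg_one, one_mul]

lemma exists_tendsto_sum_zipfP_rpow_neg (hε : 0 < ε)
    (hK : (fun n => (K n : ℝ)) =O[atTop] fun n => (n : ℝ) ^ (1 - ε)) {γ : ℝ} (hγ : 1 ≤ γ)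
    (hγε : (γ - 1) / γ < ε) :
    ∃ c : ℝ, 0 < c ∧
      Tendsto (fun n : ℕ => ∑ j : Fin (K n), (zipfP (K n) γ j * n) ^ (-c)) atTop (𝓝 0) := by
  have hs : 0 < 1 - γ * (1 - ε) := by
    linarith [(div_lt_iff₀ (by linarith : (0 : ℝ) < γ)).1 hγε]
  refine exists_tendsto_sum_rpow_neg (a := γ + (1 - γ * (1 - ε))) hK (by linarith) (by linarith)
    ?_ (by positivity) fun n j => le_zipfP hγ hs j
  nlinarith

lemma Kf_isBigO (hε : ε ≤ 1) :
    (fun n => (Kf ε n : ℝ)) =O[atTop] fun n => (n : ℝ) ^ (1 - ε) := by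
  refine .of_bound 2 ?_
  filter_upwards [eventually_ge_atTop 1] with n hn
  have hpow : 1 ≤ (n : ℝ) ^ (1 - ε) :=
    Real.one_le_rpow (Nat.one_le_cast.2 hn) (sub_nonneg.2 hε)
  rw [Real.norm_natCast, Real.norm_of_nonneg (by positivity), Kf]
  linarith [Nat.ceil_lt_add_one (zero_le_one.trans hpow)]

end Popularity

theorem statement11_general (K : ℕ → ℕ) :
    (∀ p : (n : ℕ) → Fin (K n) → ℝ,
      (∀ n j, 0 ≤ p n j) → (∀ n, 1 ≤ n → ∑ j, p n j = 1) →
      (∃ c : ℝ, 0 < c ∧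
        Tendsto (fun m : ℕ => ∑ j : Fin (K (m ^ 2)), (p (m ^ 2) j * ((m ^ 2 : ℕ) : ℝ)) ^ (-c))
          atTop (𝓝 0)) →
      ∃ C : ℝ, 0 < C ∧
        Tendsto (fun m : ℕ => probIIP m 1 (K (m ^ 2)) (2 * m) (m ^ 2) (p (m ^ 2))
            {x | (maxLoadII x.2.2.1 x.2.2.2 : ℝ) ≤ C * Real.log (Real.log ((m ^ 2 : ℕ) : ℝ))})
          atTop (𝓝 1)) ∧
    ∀ ε : ℝ, 0 < ε → ((fun n => (K n : ℝ)) =O[atTop] fun n => (n : ℝ) ^ (1 - ε)) →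
      (∃ c : ℝ, 0 < c ∧
        Tendsto (fun m : ℕ =>
            ∑ _j : Fin (K (m ^ 2)), ((K (m ^ 2) : ℝ)⁻¹ * ((m ^ 2 : ℕ) : ℝ)) ^ (-c))
          atTop (𝓝 0)) ∧
      ∀ γ : ℝ, 1 ≤ γ → (γ - 1) / γ < ε →
        ∃ c : ℝ, 0 < c ∧
          Tendsto (fun m : ℕ =>
              ∑ j : Fin (K (m ^ 2)), (zipfP (K (m ^ 2)) γ j * ((m ^ 2 : ℕ) : ℝ)) ^ (-c))
            atTop (𝓝 0) := by
  have hsq : Tendsto (fun m : ℕ => m ^ 2) atTop atTop := tendsto_pow_atTop two_ne_zero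
  refine ⟨fun p hp hp1 ⟨c, hc, hsum⟩ => ?_, fun ε hε hK => ⟨?_, fun γ hγ hγε => ?_⟩⟩
  · exact exists_tendsto_probIIP_maxLoad_le_log_log (fun m => hp (m ^ 2))
      (fun m hm => hp1 (m ^ 2) (Nat.pow_pos hm)) hc hsum
  · obtain ⟨c, hc, hsum⟩ := exists_tendsto_sum_uniform_rpow_neg hε hK
    exact ⟨c, hc, hsum.comp hsq⟩
  · obtain ⟨c, hc, hsum⟩ := exists_tendsto_sum_zipfP_rpow_neg hε hK hγ hγε
    exact ⟨c, hc, hsum.comp hsq⟩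

/-- Let `K = ⌈n^(1-ε)⌉` for a constant `0 < ε < 1`, `M = 1`, and no
proximity constraint (`r = 2m ≥` diameter, so the two candidates are chosen uniformly
among all nodes caching the requested file).  If the popularity distribution `P`
satisfies `∑_j (p_j·n)^(-c) = o(1)` for some constant `c > 0`, then Strategy II
achieves maximum load `O(log log n)` with probability `1 - o(1)`.  In particular the
Uniform distribution satisfies this hypothesis, and the Zipf distribution with
parameter `γ ≥ 1` satisfies it whenever `ε ∈ ((γ-1)/γ, 1)`. -/
theorem statement11 (ε : ℝ) (hε0 : 0 < ε) (hε1 : ε < 1) :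
    (∀ p : (n : ℕ) → Fin (Kf ε n) → ℝ,
      (∀ n j, 0 ≤ p n j) → (∀ n, 1 ≤ n → ∑ j, p n j = 1) →
      (∃ c : ℝ, 0 < c ∧
        Filter.Tendsto (fun m : ℕ =>
            ∑ j : Fin (Kf ε (m ^ 2)), (p (m ^ 2) j * ((m ^ 2 : ℕ) : ℝ)) ^ (-c))
          atTop (nhds 0)) →
      ∃ C : ℝ, 0 < C ∧
        Filter.Tendsto (fun m : ℕ =>
            probIIP m 1 (Kf ε (m ^ 2)) (2 * m) (m ^ 2) (p (m ^ 2))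
              {x | (maxLoadII x.2.2.1 x.2.2.2 : ℝ) ≤
                C * Real.log (Real.log ((m ^ 2 : ℕ) : ℝ))})
          atTop (nhds 1)) ∧
    (∃ c : ℝ, 0 < c ∧
      Filter.Tendsto (fun m : ℕ =>
          ∑ _j : Fin (Kf ε (m ^ 2)),
            (((Kf ε (m ^ 2) : ℝ))⁻¹ * ((m ^ 2 : ℕ) : ℝ)) ^ (-c))
        atTop (nhds 0)) ∧
    (∀ γ : ℝ, 1 ≤ γ → (γ - 1) / γ < ε →
      ∃ c : ℝ, 0 < c ∧
        Filter.Tendsto (fun m : ℕ =>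
            ∑ j : Fin (Kf ε (m ^ 2)),
              (zipfP (Kf ε (m ^ 2)) γ j * ((m ^ 2 : ℕ) : ℝ)) ^ (-c))
          atTop (nhds 0)) := by
  obtain ⟨hload, hexamples⟩ := statement11_general (Kf ε)
  exact ⟨hload, hexamples ε hε0 (Kf_isBigO hε1.le)⟩
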